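/- Let W₁, W₂ be nonempty closed spherically convex subsets of S^d. Then 𝒞(W₁,W₂) = W₁° if and only if −W₂ ⊆ W₁. -/

import Mathlib

open scoped RealInnerProductSpace Pointwise

noncomputable section

/-- Euclidean space `ℝ^{d+1}`. -/
abbrev E (d : ℕ) : Type := EuclideanSpace ℝ (Fin (d + 1))

/-- The unit sphere `S^d ⊆ ℝ^{d+1}`. -/
def sph (d : ℕ) : Set (E d) := {x | ‖x‖ = 1}

/-- The closed hemisphere `H(P)` centered at `P`. -/
def hemi {d : ℕ} (P : E d) : Set (E d) := {Q ∈ sph d | 0 ≤ ⟪P, Q⟫}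

/-- The spherical polar set `W°`. -/
def polar {d : ℕ} (W : Set (E d)) : Set (E d) := {Q ∈ sph d | ∀ P ∈ W, 0 ≤ ⟪P, Q⟫}

/-- The semi-separation center set `𝒞(W₁, W₂)`. -/
def ssc {d : ℕ} (W₁ W₂ : Set (E d)) : Set (E d) :=
  {P ∈ sph d | (∀ Q ∈ W₁, 0 ≤ ⟪P, Q⟫) ∧ ∀ R ∈ W₂, ⟪P, R⟫ ≤ 0}

/-- `W ⊆ S^d` is hemispherical if it misses some closed hemisphere. -/
def hemispherical {d : ℕ} (W : Set (E d)) : Prop := ∃ P ∈ sph d, W ∩ hemi P = ∅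

/-- A hemispherical set is spherically convex if it contains the normalized segment
between any two of its points. -/
def sphConvex {d : ℕ} (W : Set (E d)) : Prop :=
  hemispherical W ∧ ∀ P ∈ W, ∀ Q ∈ W, ∀ t : ℝ, t ∈ Set.Icc (0 : ℝ) 1 →
    (‖t • P + (1 - t) • Q‖)⁻¹ • (t • P + (1 - t) • Q) ∈ W

/-- The spherical convex hull `s-conv(W)`: normalized convex combinations of
finitely many points of `W`. -/
def sconv {d : ℕ} (W : Set (E d)) : Set (E d) :=
  {x | ∃ (n : ℕ) (P : Fin n → E d) (l : Fin n → ℝ),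
    (∀ i, P i ∈ W) ∧ (∀ i, 0 ≤ l i) ∧ (∑ i, l i) = 1 ∧
    x = (‖∑ i, l i • P i‖)⁻¹ • (∑ i, l i • P i)}

/-!
A closed spherically convex set `W` is the trace on the unit sphere of a proper cone, so it equals
its double polar because a proper cone equals its double inner dual. Since
`𝒞(W₁, W₂) = W₁° ∩ (-W₂)°`, the equality `𝒞(W₁, W₂) = W₁°` says that `W₁° ⊆ (-W₂)°`, which by
polarity amounts to `-W₂ ⊆ W₁°° = W₁`.
-/

open Metric NormedSpace ProperCone

section NormedSpace

variable {V : Type*} [NormedAddCommGroup V] [NormedSpace ℝ V] {W : Set V}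

/-- Spherical convexity of a set `W` of unit vectors: `W` contains the radial projection of every
segment between two of its points. The origin, which lies on such a segment only when the endpoints
are antipodal, has no radial projection and is left out, so great subspheres and antipodal
pairs qualify. -/
def SphericallyConvex (W : Set V) : Prop :=
  ∀ ⦃x⦄, x ∈ W → ∀ ⦃y⦄, y ∈ W → ∀ ⦃z⦄, z ∈ segment ℝ x y → z ≠ 0 → normalize z ∈ W

/-- The cone consisting of the rays from `0` through the unit vectors in `W`. It contains `0` even
when `W` is empty. -/
def radialCone (W : Set V) : Set V := {y | y ≠ 0 → normalize y ∈ W}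

lemma sphere_inter_radialCone (hW : W ⊆ sphere 0 1) : sphere 0 1 ∩ radialCone W = W := by
  ext x
  constructor
  · rintro ⟨hx, hxW⟩
    simpa only [normalize_eq_self_of_norm_eq_one (mem_sphere_zero_iff_norm.mp hx)] using
      hxW (ne_of_mem_sphere hx one_ne_zero)
  · intro hx
    refine ⟨hW hx, fun _ => ?_⟩
    rwa [normalize_eq_self_of_norm_eq_one (mem_sphere_zero_iff_norm.mp (hW hx))]

lemma smul_mem_radialCone {c : ℝ} (hc : 0 ≤ c) {y : V} (hy : y ∈ radialCone W) :
    c • y ∈ radialCone W := by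
  intro hcy
  obtain ⟨hc₀, hy₀⟩ := smul_ne_zero_iff.mp hcy
  rw [normalize_smul_of_pos (hc.lt_of_ne' hc₀)]
  exact hy hy₀

lemma inv_norm_add_norm_smul_add_mem_segment {y : V} (hy : y ≠ 0) (z : V) :
    (‖y‖ + ‖z‖)⁻¹ • (y + z) ∈ segment ℝ (normalize y) (normalize z) := by
  refine mem_segment_iff_div.mpr ⟨‖y‖, ‖z‖, norm_nonneg y, norm_nonneg z, by positivity, ?_⟩
  simp only [div_eq_inv_mul, mul_smul, norm_smul_normalize, smul_add]

lemma SphericallyConvex.add_mem_radialCone (hW : SphericallyConvex W) {y z : V}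
    (hy : y ∈ radialCone W) (hz : z ∈ radialCone W) : y + z ∈ radialCone W := by
  rcases eq_or_ne y 0 with rfl | hy₀
  · rwa [zero_add]
  rcases eq_or_ne z 0 with rfl | hz₀
  · rwa [add_zero]
  intro hyz
  have hpos : 0 < (‖y‖ + ‖z‖)⁻¹ := by positivity
  rw [← normalize_smul_of_pos hpos]
  exact hW (hy hy₀) (hz hz₀) (inv_norm_add_norm_smul_add_mem_segment hy₀ z)
    (smul_ne_zero hpos.ne' hyz)

lemma isClosed_radialCone (hW : IsClosed W) : IsClosed (radialCone W) := by
  have hcont : ContinuousOn (normalize : V → V) {0}ᶜ :=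
    (continuousOn_id.norm.inv₀ fun _ hx => norm_ne_zero_iff.mpr hx).smul continuousOn_id
  have hcompl : (radialCone W)ᶜ = {0}ᶜ ∩ (normalize : V → V) ⁻¹' Wᶜ := by
    ext y
    simp [radialCone]
  rw [← isOpen_compl_iff, hcompl]
  exact hcont.isOpen_inter_preimage isOpen_compl_singleton hW.isOpen_compl

/-- The radial cone of a closed spherically convex set, as a proper cone; this is what makes cone
duality available for such sets. -/
def SphericallyConvex.properCone (hW : SphericallyConvex W) (hcl : IsClosed W) :
    ProperCone ℝ V where
  carrier := radialCone W
  add_mem' := hW.add_mem_radialCone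
  zero_mem' h := absurd rfl h
  smul_mem' c _ hy := smul_mem_radialCone c.2 hy
  isClosed' := isClosed_radialCone hcl

lemma SphericallyConvex.coe_properCone (hW : SphericallyConvex W) (hcl : IsClosed W) :
    (hW.properCone hcl : Set V) = radialCone W := rfl

end NormedSpace

section InnerProductSpace

variable {H : Type*} [NormedAddCommGroup H] [InnerProductSpace ℝ H]

/-- The semi-separation center set `𝒞(W₁, W₂)` in the unit sphere of an inner product space: the
centers of the closed hemispheres that contain `W₁` and whose antipodal hemispheres contain `W₂`. -/
def semiSeparationCenters (W₁ W₂ : Set H) : Set H :=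
  {P ∈ sphere 0 1 | (∀ Q ∈ W₁, 0 ≤ ⟪P, Q⟫) ∧ ∀ R ∈ W₂, ⟪P, R⟫ ≤ 0}

variable [CompleteSpace H]

/-- The spherical polar `W°` in the unit sphere of a Hilbert space, expressed through the inner dual
cone of `W`. -/
def sphericalPolar (W : Set H) : Set H := sphere 0 1 ∩ innerDual W

variable {W W₁ W₂ : Set H}

lemma subset_sphericalPolar_comm (hW₁ : W₁ ⊆ sphere 0 1) (hW₂ : W₂ ⊆ sphere 0 1) :
    W₁ ⊆ sphericalPolar W₂ ↔ W₂ ⊆ sphericalPolar W₁ := by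
  simp only [sphericalPolar, Set.subset_inter_iff, hW₁, hW₂, true_and]
  simp only [Set.subset_def, SetLike.mem_coe, mem_innerDual]
  constructor <;> intro h x hx y hy <;> rw [real_inner_comm] <;> exact h y hy hx

lemma innerDual_sphere_inter {s : Set H} (hs : ∀ c : ℝ, 0 < c → ∀ x ∈ s, c • x ∈ s) :
    innerDual (sphere 0 1 ∩ s) = innerDual s := by
  refine le_antisymm (fun y hy x hx => ?_) (innerDual_le_innerDual Set.inter_subset_right)
  rcases eq_or_ne x 0 with rfl | hx₀
  · simp
  have hnormalize : normalize x ∈ sphere 0 1 ∩ s :=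
    ⟨mem_sphere_zero_iff_norm.mpr (norm_normalize hx₀), hs _ (by positivity) x hx⟩
  change 0 ≤ ⟪x, y⟫
  rw [← norm_smul_normalize x, real_inner_smul_left]
  exact mul_nonneg (norm_nonneg x) (hy hnormalize)

theorem SphericallyConvex.sphericalPolar_sphericalPolar (hW : SphericallyConvex W)
    (hcl : IsClosed W) (hsub : W ⊆ sphere 0 1) : sphericalPolar (sphericalPolar W) = W := by
  set C := hW.properCone hcl
  have innerDual_trace (K : ProperCone ℝ H) :
      innerDual (sphere (0 : H) 1 ∩ K) = innerDual (K : Set H) :=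
    innerDual_sphere_inter fun _ hc _ hx => K.smul_mem hx hc.le
  have hC : sphere 0 1 ∩ (C : Set H) = W := by
    rw [hW.coe_properCone hcl, sphere_inter_radialCone hsub]
  calc sphericalPolar (sphericalPolar W)
      = sphere 0 1 ∩ innerDual (innerDual (sphere 0 1 ∩ (C : Set H)) : Set H) := by
        rw [hC, sphericalPolar, sphericalPolar, innerDual_trace]
    _ = sphere 0 1 ∩ C := by rw [innerDual_trace, innerDual_innerDual]
    _ = W := hC

lemma semiSeparationCenters_eq_inter_sphericalPolar (W₁ W₂ : Set H) :
    semiSeparationCenters W₁ W₂ = sphericalPolar W₁ ∩ sphericalPolar (-W₂) := by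
  ext P
  simp only [semiSeparationCenters, sphericalPolar, Set.mem_ofPred_eq, Set.mem_inter_iff,
    SetLike.mem_coe, mem_innerDual, real_inner_comm P, Set.mem_neg, Set.forall_neg_mem,
    inner_neg_right, Left.nonneg_neg_iff]
  exact and_and_left

theorem stmt_5_general (hW₁ : W₁ ⊆ sphere 0 1) (hW₂ : W₂ ⊆ sphere 0 1) (hcl₁ : IsClosed W₁)
    (hcv₁ : SphericallyConvex W₁) :
    semiSeparationCenters W₁ W₂ = sphericalPolar W₁ ↔ -W₂ ⊆ W₁ := by
  have hnegW₂ : -W₂ ⊆ sphere 0 1 := by simpa using Set.neg_subset_neg.mpr hW₂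
  rw [semiSeparationCenters_eq_inter_sphericalPolar, Set.inter_eq_left,
    subset_sphericalPolar_comm (W₁ := sphericalPolar W₁) Set.inter_subset_left hnegW₂,
    hcv₁.sphericalPolar_sphericalPolar hcl₁ hW₁]

end InnerProductSpace

section Euclidean

variable {d : ℕ}

lemma sph_eq_sphere : sph d = sphere 0 1 := by
  ext
  exact mem_sphere_zero_iff_norm.symm

lemma polar_eq_sphericalPolar (W : Set (E d)) : polar W = sphericalPolar W := by
  rw [polar, sph_eq_sphere]
  rfl

lemma ssc_eq_semiSeparationCenters (W₁ W₂ : Set (E d)) :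
    ssc W₁ W₂ = semiSeparationCenters W₁ W₂ := by
  rw [ssc, sph_eq_sphere]
  rfl

lemma sphConvex.sphericallyConvex {W : Set (E d)} (hW : sphConvex W) : SphericallyConvex W := by
  rintro P hP Q hQ _ ⟨a, b, ha, hb, hab, rfl⟩ -
  obtain rfl : b = 1 - a := by linarith
  exact hW.2 P hP Q hQ a ⟨ha, by linarith⟩

end Euclidean

/-- `𝒞(W₁,W₂) = W₁°` if and only if `−W₂ ⊆ W₁`. -/
theorem stmt_5 (d : ℕ) (W₁ W₂ : Set (E d)) (hW₁ : W₁ ⊆ sph d) (hW₂ : W₂ ⊆ sph d)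
    (hne₁ : W₁.Nonempty) (hne₂ : W₂.Nonempty)
    (hcl₁ : IsClosed W₁) (hcl₂ : IsClosed W₂)
    (hcv₁ : sphConvex W₁) (hcv₂ : sphConvex W₂) :
    ssc W₁ W₂ = polar W₁ ↔ -W₂ ⊆ W₁ := by
  rw [ssc_eq_semiSeparationCenters, polar_eq_sphericalPolar]
  rw [sph_eq_sphere] at hW₁ hW₂
  exact stmt_5_general hW₁ hW₂ hcl₁ hcv₁.sphericallyConvex
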